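/- arXiv:2309.16612 — 2 statements merged into one kernel-verified Lean document; each statement's English description precedes it below -/
import Mathlib

section
/- Let R be a commutative ring, A an associative R-algebra, M an (A,A)-bimodule whose left and right A-actions are R-linear and commute with each other, and D : A → M an R-linear map satisfying the Leibniz rule D(ab) = a·D(b) + D(a)·b for all a, b ∈ A. Suppose z ∈ A and q ∈ R satisfy the twisted commutation relation z·D(z) = q • (D(z)·z) in M. Then for every positive integer k, D(z^k) = (k)_q • (D(z)·z^{k-1}), where (k)_q = 1 + q + q² + ⋯ + q^{k-1}. -/
open MulOpposite

/-!
The untwisted Leibniz rule expands `D (z ^ (n + 1))` as the sum of `z ^ i · D z · z ^ j` over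
`i + j = n`. Moving the left factor `z ^ i` past `D z` costs `q ^ i`, so every summand becomes
`q ^ i • (D z · z ^ n)` and the coefficients add up to the quantum integer.
-/

section

open Finset

variable {R A M : Type*}

theorem map_pow_succ_eq_sum_antidiagonal_of_leibniz [Monoid A] [AddCommMonoid M]
    [DistribMulAction A M] [MulAction Aᵐᵒᵖ M] {D : A → M}
    (hD : ∀ a b : A, D (a * b) = a • D b + op b • D a) (z : A) (n : ℕ) :
    D (z ^ (n + 1)) = ∑ p ∈ antidiagonal n, z ^ p.1 • op (z ^ p.2) • D z := by
  induction n with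
  | zero => simp
  | succ n ih =>
    calc D (z ^ (n + 1 + 1))
        = op (z ^ (n + 1)) • D z + z • D (z ^ (n + 1)) := by rw [pow_succ', hD, add_comm]
      _ = op (z ^ (n + 1)) • D z
            + ∑ p ∈ antidiagonal n, z ^ (p.1 + 1) • op (z ^ p.2) • D z := by
          simp only [ih, smul_sum, smul_smul, ← pow_succ']
      _ = ∑ p ∈ antidiagonal (n + 1), z ^ p.1 • op (z ^ p.2) • D z := by
          rw [Nat.sum_antidiagonal_succ, pow_zero, one_smul]

theorem pow_smul_eq_pow_smul_op_pow_smul [Monoid R] [Monoid A] [MulAction R M] [MulAction A M]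
    [MulAction Aᵐᵒᵖ M] [SMulCommClass A Aᵐᵒᵖ M] [SMulCommClass A R M] [SMulCommClass Aᵐᵒᵖ R M]
    {z : A} {q : R} {m : M} (h : z • m = q • op z • m) (n : ℕ) :
    z ^ n • m = q ^ n • op (z ^ n) • m := by
  induction n with
  | zero => simp
  | succ n ih =>
    calc z ^ (n + 1) • m
        = z • q ^ n • op (z ^ n) • m := by rw [pow_succ', mul_smul, ih]
      _ = q ^ n • op (z ^ n) • z • m := by rw [smul_comm z, smul_comm z]
      _ = q ^ n • q • op (z ^ n) • op z • m := by rw [h, smul_comm _ q]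
      _ = q ^ (n + 1) • op (z ^ (n + 1)) • m := by
          rw [smul_smul, ← pow_succ, smul_smul, ← op_mul, ← pow_succ']

theorem qLeibniz_power_rule_bimodule_general [Semiring R] [Monoid A] [AddCommMonoid M]
    [Module R M] [DistribMulAction A M] [MulAction Aᵐᵒᵖ M]
    [SMulCommClass A Aᵐᵒᵖ M] [SMulCommClass A R M] [SMulCommClass Aᵐᵒᵖ R M] {D : A → M}
    (hD : ∀ a b : A, D (a * b) = a • D b + op b • D a) {z : A} {q : R}
    (hz : z • D z = q • op z • D z) (n : ℕ) :
    D (z ^ (n + 1)) = (∑ i ∈ range (n + 1), q ^ i) • op (z ^ n) • D z := by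
  have summand_eq {i j : ℕ} (hij : i + j = n) :
      z ^ i • op (z ^ j) • D z = q ^ i • op (z ^ n) • D z := by
    rw [smul_comm, pow_smul_eq_pow_smul_op_pow_smul hz, smul_comm _ (q ^ i), smul_smul (op _),
      ← op_mul, ← pow_add, hij]
  calc D (z ^ (n + 1))
      = ∑ p ∈ antidiagonal n, z ^ p.1 • op (z ^ p.2) • D z :=
        map_pow_succ_eq_sum_antidiagonal_of_leibniz hD z n
    _ = ∑ p ∈ antidiagonal n, q ^ p.1 • op (z ^ n) • D z :=
        sum_congr rfl fun _ hp ↦ summand_eq (mem_antidiagonal.mp hp)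
    _ = ∑ i ∈ range (n + 1), q ^ i • op (z ^ n) • D z :=
        Nat.sum_antidiagonal_eq_sum_range_succ (fun i _ ↦ q ^ i • op (z ^ n) • D z) n
    _ = (∑ i ∈ range (n + 1), q ^ i) • op (z ^ n) • D z := sum_smul.symm

end

/-- The q-Leibniz power rule in an (A,A)-bimodule: if `D` satisfies the Leibniz rule
and `z·D(z) = q • (D(z)·z)`, then `D(z^k) = (k)_q • (D(z)·z^{k-1})`, where the right
A-action on the bimodule `M` is encoded as the `Aᵐᵒᵖ`-action. -/
theorem qLeibniz_power_rule_bimodule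
    {R : Type*} [CommRing R] {A : Type*} [Ring A] [Algebra R A]
    {M : Type*} [AddCommGroup M] [Module R M]
    [Module A M] [Module Aᵐᵒᵖ M] [SMulCommClass A Aᵐᵒᵖ M]
    [IsScalarTower R A M] [IsScalarTower R Aᵐᵒᵖ M]
    (D : A →ₗ[R] M)
    (hD : ∀ a b : A, D (a * b) = a • D b + op b • D a)
    (z : A) (q : R)
    (hz : z • D z = q • (op z • D z))
    (k : ℕ) (hk : 0 < k) :
    D (z ^ k) = (∑ i ∈ Finset.range k, q ^ i) • (op (z ^ (k - 1)) • D z) := by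
  obtain ⟨n, rfl⟩ := Nat.exists_eq_add_one.mpr hk
  exact qLeibniz_power_rule_bimodule_general hD hz n
end

section
/- Let R be a commutative ring, A an associative R-algebra, M an (A,A)-bimodule whose left and right A-actions are R-linear and commute with each other, and D : A → M an R-linear map satisfying D(ab) = a·D(b) + D(a)·b for all a, b ∈ A. Suppose z ∈ A and q ∈ R satisfy z·D(z) = q • (D(z)·z). If moreover G : M → N is a morphism of (A,A)-bimodules into a further such bimodule N, and there is an element κ ∈ N with G(D(z)) = κ·z and z·κ = κ·z, then for every positive integer k, G(D(z^k)) = (k)_q • (κ·z^k), where (k)_q = 1 + q + ⋯ + q^{k-1}. -/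
open MulOpposite

/-!
Iterating the Leibniz rule gives `D (z ^ (n + 1)) = ∑ z ^ i · D z · z ^ j` over `i + j = n`. Moving
`z ^ i` across `D z` costs a factor `q ^ i`, so every summand is a multiple of `D z · z ^ n` and
the coefficients add up to `(n + 1)_q`. Applying `G` turns `D z · z ^ n` into `κ · z ^ (n + 1)`.
-/

theorem pow_smul_eq_pow_smul_pow_smul {A B R X : Type*} [Monoid A] [Monoid B] [Monoid R]
    [MulAction A X] [MulAction B X] [MulAction R X]
    [SMulCommClass A B X] [SMulCommClass A R X] [SMulCommClass B R X]
    {a : A} {b : B} {q : R} {x : X} (h : a • x = q • b • x) (n : ℕ) :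
    a ^ n • x = q ^ n • b ^ n • x := by
  induction n with
  | zero => simp only [pow_zero, one_smul]
  | succ n ih =>
    calc
      a ^ (n + 1) • x = a • q ^ n • b ^ n • x := by rw [pow_succ', mul_smul, ih]
      _ = q ^ n • b ^ n • a • x := by rw [smul_comm a, smul_comm a]
      _ = q ^ n • q • b ^ n • b • x := by rw [h, smul_comm (b ^ n) q]
      _ = q ^ (n + 1) • b ^ (n + 1) • x := by simp only [pow_succ, mul_smul]

section Leibniz

open Finset.HasAntidiagonal (antidiagonal mem_antidiagonal)

variable {A M : Type*} [Monoid A] [AddCommMonoid M]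
  [DistribMulAction A M] [DistribMulAction Aᵐᵒᵖ M] {D : A → M}

theorem leibniz_pow_succ (hD : ∀ a b : A, D (a * b) = a • D b + op b • D a) (z : A) (n : ℕ) :
    D (z ^ (n + 1)) = ∑ p ∈ antidiagonal n, z ^ p.1 • op (z ^ p.2) • D z := by
  induction n with
  | zero => simp
  | succ n ih =>
    rw [pow_succ', hD, ih, Finset.Nat.sum_antidiagonal_succ, Finset.smul_sum, add_comm]
    simp only [pow_zero, one_smul, pow_succ', mul_smul]

variable {R : Type*} [Semiring R] [Module R M]
  [SMulCommClass A Aᵐᵒᵖ M] [SMulCommClass A R M] [SMulCommClass Aᵐᵒᵖ R M]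

theorem leibniz_pow_succ_eq_geom_sum_smul
    (hD : ∀ a b : A, D (a * b) = a • D b + op b • D a)
    {z : A} {q : R} (hz : z • D z = q • op z • D z) (n : ℕ) :
    D (z ^ (n + 1)) = (∑ i ∈ Finset.range (n + 1), q ^ i) • op (z ^ n) • D z := by
  have summand_eq : ∀ p ∈ antidiagonal n,
      z ^ p.1 • op (z ^ p.2) • D z = q ^ p.1 • op (z ^ n) • D z := by
    rintro ⟨i, j⟩ hij
    obtain rfl : i + j = n := mem_antidiagonal.mp hij
    calc
      z ^ i • op (z ^ j) • D z = op (z ^ j) • q ^ i • op z ^ i • D z := by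
        rw [smul_comm, pow_smul_eq_pow_smul_pow_smul hz]
      _ = q ^ i • op (z ^ (i + j)) • D z := by
        rw [smul_comm, smul_smul (op (z ^ j)), ← op_pow, ← op_mul, ← pow_add]
  rw [leibniz_pow_succ hD, Finset.sum_congr rfl summand_eq,
    Finset.Nat.sum_antidiagonal_eq_sum_range_succ_mk, Finset.sum_smul]

theorem curvature_qinteger_rescaling_general
    {N : Type*} [AddCommMonoid N] [Module R N] [MulAction Aᵐᵒᵖ N]
    (hD : ∀ a b : A, D (a * b) = a • D b + op b • D a)
    {z : A} {q : R} (hz : z • D z = q • op z • D z)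
    (G : M →ₗ[R] N) (hG : ∀ (a : A) (m : M), G (op a • m) = op a • G m)
    {κ : N} (hκ : G (D z) = op z • κ) {k : ℕ} (hk : 0 < k) :
    G (D (z ^ k)) = (∑ i ∈ Finset.range k, q ^ i) • op (z ^ k) • κ := by
  obtain ⟨n, rfl⟩ := Nat.exists_eq_add_one.mpr hk
  have absorb : op (z ^ n) • op z • κ = op (z ^ (n + 1)) • κ := by
    rw [smul_smul, ← op_mul, ← pow_succ']
  rw [leibniz_pow_succ_eq_geom_sum_smul hD hz, map_smul, hG, hκ, absorb]

end Leibniz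

/-- Abstract curvature computation: with `D` a Leibniz-rule map into an
(A,A)-bimodule `M` satisfying the twisted relation `z·D(z) = q • (D(z)·z)`,
and `G : M → N` a bimodule morphism such that `G(D z) = κ·z` for some `κ ∈ N`
with `z·κ = κ·z`, one gets `G(D(z^k)) = (k)_q • (κ·z^k)` for all `k ≥ 1`.
Right A-actions on the bimodules are encoded as `Aᵐᵒᵖ`-actions. -/
theorem curvature_qinteger_rescaling
    {R : Type*} [CommRing R] {A : Type*} [Ring A] [Algebra R A]
    {M : Type*} [AddCommGroup M] [Module R M]
    [Module A M] [Module Aᵐᵒᵖ M] [SMulCommClass A Aᵐᵒᵖ M]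
    [IsScalarTower R A M] [IsScalarTower R Aᵐᵒᵖ M]
    {N : Type*} [AddCommGroup N] [Module R N]
    [Module A N] [Module Aᵐᵒᵖ N] [SMulCommClass A Aᵐᵒᵖ N]
    [IsScalarTower R A N] [IsScalarTower R Aᵐᵒᵖ N]
    (D : A →ₗ[R] M)
    (hD : ∀ a b : A, D (a * b) = a • D b + op b • D a)
    (z : A) (q : R)
    (hz : z • D z = q • (op z • D z))
    (G : M →ₗ[R] N)
    (hGl : ∀ (a : A) (m : M), G (a • m) = a • G m)
    (hGr : ∀ (a : A) (m : M), G (op a • m) = op a • G m)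
    (κ : N)
    (hκ : G (D z) = op z • κ)
    (hκz : z • κ = op z • κ)
    (k : ℕ) (hk : 0 < k) :
    G (D (z ^ k)) = (∑ i ∈ Finset.range k, q ^ i) • (op (z ^ k) • κ) := by
  have : SMulCommClass A R M := IsScalarTower.to_smulCommClass'
  have : SMulCommClass Aᵐᵒᵖ R M := IsScalarTower.to_smulCommClass'
  exact curvature_qinteger_rescaling_general hD hz G hGr hκ hk
end
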